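/- Theorem 6.1(iii): with the notation of the context, for every hermitian matrix u one has (4/n)·Σ_α 𝓛_{e_α,u}·𝓛_{e_α} = −𝒳_u·𝒴_e + 𝒳_e·𝒴_u. -/

import Mathlib

open Matrix
open scoped ComplexOrder

/-- The Jordan product of two complex matrices. -/
noncomputable def jordanProd {n : ℕ} (a b : Matrix (Fin n) (Fin n) ℂ) :
    Matrix (Fin n) (Fin n) ℂ :=
  (1 / 2 : ℂ) • (a * b + b * a)

/-- The Jordan triple product `{uvw} = u∘(v∘w) − v∘(u∘w) + (u∘v)∘w`. -/
noncomputable def jTriple {n : ℕ} (u v w : Matrix (Fin n) (Fin n) ℂ) :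
    Matrix (Fin n) (Fin n) ℂ :=
  jordanProd u (jordanProd v w) - jordanProd v (jordanProd u w)
    + jordanProd (jordanProd u v) w

/-- The real inner product `⟨u|v⟩ = (1/n)·Re(tr(u·v))`. -/
noncomputable def jInner {n : ℕ} (u v : Matrix (Fin n) (Fin n) ℂ) : ℝ :=
  (1 / n : ℝ) * ((u * v).trace).re

/-- `𝒴_u = ⟨u|x⟩`. -/
noncomputable def Yfun {n : ℕ} (x u : Matrix (Fin n) (Fin n) ℂ) : ℝ :=
  jInner u x

/-- `𝓛_u = ⟨u∘x|π⟩`. -/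
noncomputable def Lfun {n : ℕ} (x p u : Matrix (Fin n) (Fin n) ℂ) : ℝ :=
  jInner (jordanProd u x) p

/-- `𝓛_{u,v} = ⟨u∘(v∘x) − v∘(u∘x)|π⟩ − μ·i·tr(x·[u,v])/(2·tr x)`. -/
noncomputable def LLfun {n : ℕ} (μ : ℝ) (x p u v : Matrix (Fin n) (Fin n) ℂ) : ℝ :=
  jInner (jordanProd u (jordanProd v x) - jordanProd v (jordanProd u x)) p
    - μ * (Complex.I * (x * (u * v - v * u)).trace).re / (2 * (x.trace).re)

/-- `𝒳_u = ⟨x|{πuπ}⟩ + n·μ²·Re(tr(x·u))/(tr x)² − μ·i·tr(x·[u,π])/(tr x)`. -/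
noncomputable def Xfun {n : ℕ} (μ : ℝ) (x p u : Matrix (Fin n) (Fin n) ℂ) : ℝ :=
  jInner x (jTriple p u p) + (n : ℝ) * μ ^ 2 * ((x * u).trace).re / ((x.trace).re) ^ 2
    - μ * (Complex.I * (x * (u * p - p * u)).trace).re / (x.trace).re

/-! Shift the momentum into the complex domain: put `κ = nμ / tr x` and `P = π + iκ`. Since `π` is
hermitian, `Pᴴ = π − iκ`, and the charge `μ` disappears from all quantities involved:
`𝒳_u = ⟨u|P x Pᴴ⟩`, `𝓛_{a,u} = ¼⟨a|[u, x Pᴴ − P x]⟩` and `𝓛_a = ⟨a|x∘π⟩` with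
`x∘π = ½(x Pᴴ + P x)`. Parseval's identity turns `Σ_α 𝓛_{e_α,u} 𝓛_{e_α}` into `𝓛_{x∘π,u}`, which by
invariance of the trace is `⅛⟨u|[x Pᴴ − P x, x Pᴴ + P x]⟩`. As `x` has rank one, `x B x = tr(x B) x`
for every `B`, so this commutator equals `2(tr(P x Pᴴ) x − tr(x) P x Pᴴ)`; here
`tr(P x Pᴴ) = n𝒳_e` and `tr x = n𝒴_e`.
-/

section Matrices

variable {m ι K R : Type*}

lemma exists_eq_vecMulVec_of_rank_le_one [Field K] [Fintype ι] {A : Matrix m ι K}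
    (hA : A.rank ≤ 1) : ∃ v w, A = vecMulVec v w := by
  classical
  obtain ⟨v, hv⟩ := finrank_le_one_iff.1 hA
  choose w hw using fun j ↦ hv ⟨A.mulVecLin (Pi.single j 1), LinearMap.mem_range_self _ _⟩
  refine ⟨v, w, ?_⟩
  ext i j
  simpa [vecMulVec_apply, mul_comm] using (congrFun (congrArg Subtype.val (hw j)) i).symm

lemma mul_mul_self_of_rank_le_one [Field K] [Fintype ι] {A : Matrix ι ι K} (hA : A.rank ≤ 1)
    (B : Matrix ι ι K) : A * B * A = (A * B).trace • A := by
  obtain ⟨v, w, rfl⟩ := exists_eq_vecMulVec_of_rank_le_one hA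
  rw [vecMulVec_mul, vecMulVec_mul_vecMulVec, trace_vecMulVec, dotProduct_comm, vecMulVec_smul]

lemma trace_commutator_mul [CommRing R] [Fintype ι] (A B C : Matrix ι ι R) :
    ((A * B - B * A) * C).trace = (A * (B * C - C * B)).trace := by
  simp only [sub_mul, mul_sub, trace_sub, mul_assoc, trace_mul_comm B]

lemma commutator_sub_add_of_rank_le_one [Field K] [Fintype ι] {A : Matrix ι ι K} (hA : A.rank ≤ 1)
    (P Q : Matrix ι ι K) :
    (A * Q - P * A) * (A * Q + P * A) - (A * Q + P * A) * (A * Q - P * A) =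
      (2 : K) • ((P * A * Q).trace • A - A.trace • (P * A * Q)) := by
  classical
  have hAQPA : A * Q * P * A = (P * A * Q).trace • A := by
    rw [mul_assoc A, mul_mul_self_of_rank_le_one hA, ← mul_assoc, trace_mul_comm, mul_assoc P]
  have hAA : A * A = A.trace • A := by simpa using mul_mul_self_of_rank_le_one hA 1
  calc (A * Q - P * A) * (A * Q + P * A) - (A * Q + P * A) * (A * Q - P * A)
      = (2 : K) • (A * Q * P * A - P * (A * A) * Q) := by rw [two_smul]; noncomm_ring
    _ = (2 : K) • ((P * A * Q).trace • A - A.trace • (P * A * Q)) := by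
      rw [hAQPA, hAA, mul_smul_comm, smul_mul_assoc]

lemma ofReal_re_trace_of_isHermitian [Fintype ι] {A : Matrix ι ι ℂ} (hA : A.IsHermitian) :
    (A.trace.re : ℂ) = A.trace := by
  rw [← Complex.conj_eq_iff_re, starRingEnd_apply, ← trace_conjTranspose, hA.eq]

end Matrices

section JordanAlgebra

variable {n : ℕ} (a b c : Matrix (Fin n) (Fin n) ℂ)

lemma isHermitian_jordanProd {a b : Matrix (Fin n) (Fin n) ℂ} (ha : a.IsHermitian)
    (hb : b.IsHermitian) : (jordanProd a b).IsHermitian := by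
  simp [jordanProd, IsHermitian, conjTranspose_smul, ha.eq, hb.eq, add_comm]

lemma jordanProd_jordanProd_sub_comm :
    jordanProd a (jordanProd b c) - jordanProd b (jordanProd a c) =
      ((1 / 4 : ℝ) : ℂ) • ((a * b - b * a) * c - c * (a * b - b * a)) := by
  simp only [jordanProd, mul_add, add_mul, mul_sub, sub_mul, smul_mul_assoc, mul_smul_comm,
    mul_assoc]
  push_cast
  module

lemma jTriple_self_right : jTriple a b a = a * b * a := by
  simp only [jTriple, jordanProd, mul_add, add_mul, smul_mul_assoc, mul_smul_comm, mul_assoc]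
  module

lemma jInner_comm : jInner a b = jInner b a := by
  rw [jInner, jInner, trace_mul_comm]

lemma jInner_mul_left : jInner (a * b) c = jInner a (b * c) := by
  rw [jInner, jInner, mul_assoc]

lemma jInner_add_right : jInner a (b + c) = jInner a b + jInner a c := by
  simp [jInner, mul_add]

lemma jInner_sub_right : jInner a (b - c) = jInner a b - jInner a c := by
  simp [jInner, mul_sub]

lemma jInner_sum_right {ι : Type*} [Fintype ι] (f : ι → Matrix (Fin n) (Fin n) ℂ) :
    jInner a (∑ i, f i) = ∑ i, jInner a (f i) := by
  simp [jInner, Finset.mul_sum, trace_sum]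

lemma jInner_smul_right (r : ℝ) : jInner a ((r : ℂ) • b) = r * jInner a b := by
  simp [jInner, mul_left_comm]

lemma jInner_ofReal_mul_I_smul_right (r : ℝ) :
    jInner a ((r * Complex.I) • b) = r / n * (Complex.I * (a * b).trace).re := by
  simp only [jInner, mul_smul_comm, trace_smul, smul_eq_mul, mul_assoc, Complex.re_ofReal_mul]
  ring

lemma jInner_commutator_left : jInner (a * b - b * a) c = jInner a (b * c - c * b) := by
  rw [jInner, jInner, trace_commutator_mul]

lemma jInner_jordanProd_left : jInner (jordanProd a b) c = jInner a (jordanProd b c) := by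
  have hbca : (b * (a * c)).trace = (a * (c * b)).trace := by
    rw [trace_mul_comm, mul_assoc]
  simp only [jInner, jordanProd, smul_mul_assoc, mul_smul_comm, add_mul, mul_add, trace_smul,
    trace_add, mul_assoc, hbca]

lemma sum_jInner_mul_jInner {ι : Type*} [Fintype ι] {E : ι → Matrix (Fin n) (Fin n) ℂ}
    (hb : b = ∑ α, (jInner (E α) b : ℂ) • E α) :
    ∑ α, jInner (E α) a * jInner (E α) b = jInner a b := by
  conv_rhs => rw [hb]
  simp only [jInner_sum_right, jInner_smul_right]
  exact Finset.sum_congr rfl fun α _ ↦ by rw [jInner_comm a, mul_comm]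

end JordanAlgebra

section ShiftedMomentum

variable {n : ℕ} (κ : ℝ) {μ : ℝ} (x : Matrix (Fin n) (Fin n) ℂ) {p : Matrix (Fin n) (Fin n) ℂ}
  (a u : Matrix (Fin n) (Fin n) ℂ)

/-- The momentum `π + iκ` obtained from `π` by an imaginary shift. For `κ = nμ / tr x` the shift
absorbs every term of `𝓛` and `𝒳` that depends on the magnetic charge `μ`. -/
noncomputable def shiftedMomentum (p : Matrix (Fin n) (Fin n) ℂ) : Matrix (Fin n) (Fin n) ℂ :=
  p + (κ * Complex.I) • 1

lemma conjTranspose_shiftedMomentum (hp : p.IsHermitian) :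
    (shiftedMomentum κ p)ᴴ = p - (κ * Complex.I) • 1 := by
  simp [shiftedMomentum, conjTranspose_smul, hp.eq, sub_eq_add_neg]

lemma jordanProd_eq_shiftedMomentum (hp : p.IsHermitian) :
    jordanProd x p =
      ((1 / 2 : ℝ) : ℂ) • (x * (shiftedMomentum κ p)ᴴ + shiftedMomentum κ p * x) := by
  rw [conjTranspose_shiftedMomentum κ hp, shiftedMomentum, jordanProd]
  simp only [mul_sub, add_mul, mul_smul_comm, smul_mul_assoc, mul_one, one_mul]
  push_cast
  module

lemma mul_conjTranspose_shiftedMomentum_sub (hp : p.IsHermitian) :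
    x * (shiftedMomentum κ p)ᴴ - shiftedMomentum κ p * x =
      x * p - p * x - (((2 * κ : ℝ) : ℂ) * Complex.I) • x := by
  rw [conjTranspose_shiftedMomentum κ hp, shiftedMomentum]
  simp only [mul_sub, add_mul, mul_smul_comm, smul_mul_assoc, mul_one, one_mul]
  push_cast
  module

lemma shiftedMomentum_mul_mul_conjTranspose (hp : p.IsHermitian) :
    shiftedMomentum κ p * x * (shiftedMomentum κ p)ᴴ =
      p * x * p + ((κ ^ 2 : ℝ) : ℂ) • x - (κ * Complex.I) • (p * x - x * p) := by
  rw [conjTranspose_shiftedMomentum κ hp, shiftedMomentum]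
  simp only [mul_sub, add_mul, mul_smul_comm, smul_mul_assoc, mul_one, one_mul, smul_add,
    smul_smul, mul_mul_mul_comm _ Complex.I, Complex.I_mul_I]
  push_cast
  module

variable {κ}

lemma Lfun_eq_jInner_jordanProd (p : Matrix (Fin n) (Fin n) ℂ) :
    Lfun x p a = jInner a (jordanProd x p) :=
  jInner_jordanProd_left a x p

lemma LLfun_eq_jInner_commutator [NeZero n] (p : Matrix (Fin n) (Fin n) ℂ)
    (hκ : κ = n * μ / x.trace.re) :
    LLfun μ x p a u = 1 / 4 * jInner a
      (u * (x * p - p * x - (((2 * κ : ℝ) : ℂ) * Complex.I) • x) -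
        (x * p - p * x - (((2 * κ : ℝ) : ℂ) * Complex.I) • x) * u) := by
  have hn : (n : ℝ) ≠ 0 := NeZero.ne _
  have hjordan : jInner (jordanProd a (jordanProd u x) - jordanProd u (jordanProd a x)) p =
      1 / 4 * jInner a (u * (x * p - p * x) - (x * p - p * x) * u) := by
    rw [jordanProd_jordanProd_sub_comm, jInner_comm, jInner_smul_right, jInner_comm,
      jInner_commutator_left, jInner_commutator_left]
  have htrace : (x * (a * u - u * a)).trace = (a * (u * x - x * u)).trace := by
    rw [trace_mul_comm, trace_commutator_mul]
  rw [LLfun, hjordan, htrace, mul_sub u _ (_ • x), sub_mul _ (_ • x) u, mul_smul_comm,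
    smul_mul_assoc, sub_sub_sub_comm, ← smul_sub, jInner_sub_right a (_ - _) (_ • _),
    jInner_ofReal_mul_I_smul_right, hκ]
  field_simp
  ring

lemma Xfun_eq_jInner [NeZero n] (hp : p.IsHermitian) (hκ : κ = n * μ / x.trace.re) :
    Xfun μ x p u = jInner u (shiftedMomentum κ p * x * (shiftedMomentum κ p)ᴴ) := by
  have hn : (n : ℝ) ≠ 0 := NeZero.ne _
  have hjordan : jInner x (jTriple p u p) = jInner u (p * x * p) := by
    rw [jTriple_self_right, jInner_comm, jInner_mul_left, jInner_mul_left, jInner_comm,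
      jInner_mul_left]
  have htrace : (x * (u * p - p * u)).trace = (u * (p * x - x * p)).trace := by
    rw [trace_mul_comm, trace_commutator_mul]
  rw [Xfun, hjordan, htrace, shiftedMomentum_mul_mul_conjTranspose κ x hp, jInner_sub_right,
    jInner_add_right, jInner_smul_right, jInner_ofReal_mul_I_smul_right, hκ, trace_mul_comm x u,
    jInner, jInner]
  field_simp

lemma sum_LLfun_mul_Lfun [NeZero n] {ι : Type*} [Fintype ι] {E : ι → Matrix (Fin n) (Fin n) ℂ}
    (hE : jordanProd x p = ∑ α, (jInner (E α) (jordanProd x p) : ℂ) • E α) :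
    ∑ α, LLfun μ x p (E α) u * Lfun x p (E α) = LLfun μ x p (jordanProd x p) u := by
  simp only [LLfun_eq_jInner_commutator x _ u p rfl, Lfun_eq_jInner_jordanProd,
    mul_assoc (1 / 4 : ℝ), ← Finset.mul_sum]
  rw [sum_jInner_mul_jInner _ _ hE, jInner_comm]

lemma LLfun_jordanProd [NeZero n] (hx : x.IsHermitian) (hrank : x.rank ≤ 1)
    (hp : p.IsHermitian) (hκ : κ = n * μ / x.trace.re) :
    LLfun μ x p (jordanProd x p) u =
      1 / 4 * ((shiftedMomentum κ p * x * (shiftedMomentum κ p)ᴴ).trace.re * jInner u x -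
        x.trace.re * jInner u (shiftedMomentum κ p * x * (shiftedMomentum κ p)ᴴ)) := by
  have hPxP := isHermitian_mul_mul_conjTranspose (shiftedMomentum κ p) hx
  have hcommutator : (x * (shiftedMomentum κ p)ᴴ - shiftedMomentum κ p * x) * jordanProd x p -
      jordanProd x p * (x * (shiftedMomentum κ p)ᴴ - shiftedMomentum κ p * x) =
      ((shiftedMomentum κ p * x * (shiftedMomentum κ p)ᴴ).trace.re : ℂ) • x -
        (x.trace.re : ℂ) • (shiftedMomentum κ p * x * (shiftedMomentum κ p)ᴴ) := by
    rw [jordanProd_eq_shiftedMomentum κ x hp, mul_smul_comm, smul_mul_assoc, ← smul_sub,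
      commutator_sub_add_of_rank_le_one hrank, ofReal_re_trace_of_isHermitian hx,
      ofReal_re_trace_of_isHermitian hPxP, smul_smul]
    norm_num
  rw [LLfun_eq_jInner_commutator x _ u p hκ, jInner_comm, jInner_commutator_left,
    ← mul_conjTranspose_shiftedMomentum_sub κ x hp, hcommutator, jInner_sub_right,
    jInner_smul_right, jInner_smul_right]

end ShiftedMomentum

theorem quadratic_relation_iii_general {n : ℕ} {ι : Type*} [Fintype ι] (μ : ℝ)
    {x p : Matrix (Fin n) (Fin n) ℂ} (hx : x.IsHermitian) (hrank : x.rank = 1)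
    (hp : p.IsHermitian) {E : ι → Matrix (Fin n) (Fin n) ℂ}
    (hE : ∀ v : Matrix (Fin n) (Fin n) ℂ, v.IsHermitian →
      v = ∑ α, (jInner (E α) v : ℂ) • E α)
    (u : Matrix (Fin n) (Fin n) ℂ) :
    (4 / (n : ℝ)) * (∑ α, LLfun μ x p (E α) u * Lfun x p (E α))
      = -(Xfun μ x p u * Yfun x 1) + Xfun μ x p 1 * Yfun x u := by
  have : NeZero n := ⟨by rintro rfl; simp [Subsingleton.elim x 0] at hrank⟩
  rw [sum_LLfun_mul_Lfun x u (hE _ (isHermitian_jordanProd hx hp)),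
    LLfun_jordanProd x u hx hrank.le hp rfl, Xfun_eq_jInner x u hp rfl, Xfun_eq_jInner x 1 hp rfl]
  simp only [Yfun, jInner, one_mul]
  ring

theorem quadratic_relation_iii
    (n : ℕ) (hn : 2 ≤ n) (μ : ℝ)
    (x : Matrix (Fin n) (Fin n) ℂ)
    (hherm : x.IsHermitian) (hpsd : x.PosSemidef) (hrank : x.rank = 1)
    (p w : Matrix (Fin n) (Fin n) ℂ) (hw : w.IsHermitian) (hp : p = jordanProd x w)
    (E : Fin (n ^ 2) → Matrix (Fin n) (Fin n) ℂ)
    (hEherm : ∀ α, (E α).IsHermitian)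
    (hEorth : ∀ α β, jInner (E α) (E β) = if α = β then 1 else 0)
    (hEspan : ∀ u : Matrix (Fin n) (Fin n) ℂ, u.IsHermitian →
      u = ∑ α, (jInner (E α) u : ℂ) • E α)
    (u : Matrix (Fin n) (Fin n) ℂ) (hu : u.IsHermitian)
    :
    (4 / (n : ℝ)) * (∑ α, LLfun μ x p (E α) u * Lfun x p (E α))
      = -(Xfun μ x p u * Yfun x 1) + Xfun μ x p 1 * Yfun x u :=
  quadratic_relation_iii_general μ hherm hrank (hp ▸ isHermitian_jordanProd hherm hw) hEspan u
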